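/- Let R = ℤ[u,v,w,x,y,z], let I₀ be the ideal of 2×2 minors of the matrix with rows (u,v,w),(x,y,z), and let I = I₀ + (x³+y³+z³, ux²+vy²+wz², u²x+v²y+w²z, u³+v³+w³). Then R/I admits a finite free resolution of the form 0 → R → R⁶ → R¹¹ → R⁷ → R → R/I → 0; in particular R/I has projective dimension 4 over R and Ext^j_R(R/I, R) = 0 for j > 4. -/

import Mathlib

/-!
STATEMENT 16: Let `R = ℤ[u,v,w,x,y,z]`, `I₀` the ideal of `2×2` minors of the
matrix with rows `(u,v,w),(x,y,z)`, and
`I = I₀ + (x³+y³+z³, ux²+vy²+wz², u²x+v²y+w²z, u³+v³+w³)`.  Then `R/I` admits a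
finite free resolution `0 → R → R⁶ → R¹¹ → R⁷ → R → R/I → 0`; in particular `R/I`
has projective dimension `4` over `R` (expressed by `Ext⁴_R(R/I,R) ≠ 0`) and
`Ext^j_R(R/I, R) = 0` for `j > 4`.
-/

open CategoryTheory MvPolynomial

noncomputable section

abbrev R16 : Type := MvPolynomial (Fin 6) ℤ

namespace Stmt16

def u : R16 := X 0
def v : R16 := X 1
def w : R16 := X 2
def x : R16 := X 3
def y : R16 := X 4
def z : R16 := X 5

def I : Ideal R16 := Ideal.span
  ({v * z - w * y, w * x - u * z, u * y - v * x,
    x ^ 3 + y ^ 3 + z ^ 3, u * x ^ 2 + v * y ^ 2 + w * z ^ 2,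
    u ^ 2 * x + v ^ 2 * y + w ^ 2 * z, u ^ 3 + v ^ 3 + w ^ 3} : Set R16)

section ExtPart
variable {A : Type} [CommRing A] {M P0 P1 P2 P3 P4 : Type}
  [AddCommGroup M] [Module A M] [AddCommGroup P0] [Module A P0] [AddCommGroup P1] [Module A P1]
  [AddCommGroup P2] [Module A P2] [AddCommGroup P3] [Module A P3] [AddCommGroup P4] [Module A P4]
  [Module.Projective A P0] [Module.Projective A P1] [Module.Projective A P2]
  [Module.Projective A P3] [Module.Projective A P4]
  (d4 : P4 →ₗ[A] P3) (d3 : P3 →ₗ[A] P2) (d2 : P2 →ₗ[A] P1) (d1 : P1 →ₗ[A] P0) (p : P0 →ₗ[A] M)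

variable (A P0 P1 P2 P3 P4) in
def resX : ℕ → ModuleCat.{0} A
  | 0 => ModuleCat.of A P0
  | 1 => ModuleCat.of A P1
  | 2 => ModuleCat.of A P2
  | 3 => ModuleCat.of A P3
  | 4 => ModuleCat.of A P4
  | _ + 5 => ModuleCat.of A PUnit

def resd : ∀ n, resX A P0 P1 P2 P3 P4 (n + 1) ⟶ resX A P0 P1 P2 P3 P4 n
  | 0 => ModuleCat.ofHom d1
  | 1 => ModuleCat.ofHom d2
  | 2 => ModuleCat.ofHom d3
  | 3 => ModuleCat.ofHom d4
  | _ + 4 => 0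

variable (h4 : Function.Injective d4) (h43 : Function.Exact d4 d3) (h32 : Function.Exact d3 d2)
  (h21 : Function.Exact d2 d1) (h1 : Function.Exact d1 p) (hp : Function.Surjective p)

include h43 h32 h21 in
lemma resd_sq (n : ℕ) : resd d4 d3 d2 d1 (n + 1) ≫ resd d4 d3 d2 d1 n = 0 := by
  match n with
  | 0 => exact ModuleCat.hom_ext h21.linearMap_comp_eq_zero
  | 1 => exact ModuleCat.hom_ext h32.linearMap_comp_eq_zero
  | 2 => exact ModuleCat.hom_ext h43.linearMap_comp_eq_zero
  | n + 3 => simp [resd]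

def resC : ChainComplex (ModuleCat.{0} A) ℕ :=
  ChainComplex.of (resX A P0 P1 P2 P3 P4) (resd d4 d3 d2 d1) (resd_sq d4 d3 d2 d1 h43 h32 h21)

lemma resC_d (n : ℕ) : (resC d4 d3 d2 d1 h43 h32 h21).d (n + 1) n = resd d4 d3 d2 d1 n :=
  ChainComplex.of_d _ _ _

include h4 in
lemma resC_exact (n : ℕ) : (resC d4 d3 d2 d1 h43 h32 h21).ExactAt (n + 1) := by
  rw [HomologicalComplex.exactAt_iff' _ (n + 1 + 1) (n + 1) n (by simp) (by simp)]
  rw [ShortComplex.moduleCat_exact_iff]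
  dsimp only [HomologicalComplex.sc', HomologicalComplex.shortComplexFunctor']
  rw [resC_d, resC_d]
  match n with
  | 0 => exact fun x hx => (h21 x).1 hx
  | 1 => exact fun x hx => (h32 x).1 hx
  | 2 => exact fun x hx => (h43 x).1 hx
  | 3 => exact fun x hx => ⟨0, (h4 ((map_zero d4).trans hx.symm) : (0 : P4) = x)⟩
  | n + 4 => exact fun x hx => ⟨0, Subsingleton.elim (α := PUnit) _ _⟩

instance resX_proj (n : ℕ) : Projective (resX A P0 P1 P2 P3 P4 n) := by
  match n with
  | 0 => exact inferInstanceAs (Projective (ModuleCat.of A P0))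
  | 1 => exact inferInstanceAs (Projective (ModuleCat.of A P1))
  | 2 => exact inferInstanceAs (Projective (ModuleCat.of A P2))
  | 3 => exact inferInstanceAs (Projective (ModuleCat.of A P3))
  | 4 => exact inferInstanceAs (Projective (ModuleCat.of A P4))
  | _ + 5 => exact inferInstanceAs (Projective (ModuleCat.of A PUnit))

include h4 in
lemma resPi_qi (f : (resC d4 d3 d2 d1 h43 h32 h21) ⟶ (ChainComplex.single₀ _).obj (ModuleCat.of A M))
    (hf : ∀ x : P0, f.f 0 x = p x)
    (h1 : Function.Exact d1 p) (hp : Function.Surjective p) : QuasiIso f := 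
  ⟨fun n => by
    cases n
    · rw [ChainComplex.quasiIsoAt₀_iff, ShortComplex.quasiIso_iff_of_zeros' _ rfl rfl rfl]
      constructor
      · rw [ShortComplex.moduleCat_exact_iff]
        dsimp only [HomologicalComplex.sc', HomologicalComplex.shortComplexFunctor']
        intro x hx
        obtain ⟨y, hy⟩ := (h1 x).1 ((hf x).symm.trans hx)
        refine ⟨y, ?_⟩
        change (resC d4 d3 d2 d1 h43 h32 h21).d (0 + 1) 0 y = x
        rw [resC_d]
        exact hy
      · rw [ModuleCat.epi_iff_surjective]
        intro y
        obtain ⟨x, hx⟩ := hp y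
        exact ⟨x, (hf x).trans hx⟩
    · rw [quasiIsoAt_iff_exactAt']
      · exact resC_exact d4 d3 d2 d1 h4 h43 h32 h21 _
      · apply ChainComplex.exactAt_succ_single_obj⟩

def resPi : (resC d4 d3 d2 d1 h43 h32 h21) ⟶ (ChainComplex.single₀ _).obj (ModuleCat.of A M) :=
  (ChainComplex.toSingle₀Equiv _ _).symm ⟨ModuleCat.ofHom p, by
    refine (congrArg (· ≫ ModuleCat.ofHom p) (resC_d d4 d3 d2 d1 h43 h32 h21 0)).trans ?_
    exact ModuleCat.hom_ext h1.linearMap_comp_eq_zero⟩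

lemma resPi_f (x : P0) : (resPi d4 d3 d2 d1 p h43 h32 h21 h1).f 0 x = p x := by
  have : (resPi d4 d3 d2 d1 p h43 h32 h21 h1).f 0 = ModuleCat.ofHom p := by
    unfold resPi
    exact ChainComplex.toSingle₀Equiv_symm_apply_f_zero _ _
  rw [this]; rfl

def resP : ProjectiveResolution (ModuleCat.of A M) where
  complex := resC d4 d3 d2 d1 h43 h32 h21
  projective n := resX_proj n
  π := resPi d4 d3 d2 d1 p h43 h32 h21 h1
  quasiIso := resPi_qi d4 d3 d2 d1 p h4 h43 h32 h21 _ (resPi_f d4 d3 d2 d1 p h43 h32 h21 h1) h1 hp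

include h4 h43 h32 h21 h1 hp in
lemma ext_big (N : ModuleCat.{0} A) (j : ℕ) (hj : 4 < j) :
    Subsingleton (((Ext A (ModuleCat.{0} A) j).obj (Opposite.op (ModuleCat.of A M))).obj N) := by
  refine ModuleCat.subsingleton_of_isZero ?_
  refine Limits.IsZero.of_iso ?_ ((resP d4 d3 d2 d1 p h4 h43 h32 h21 h1 hp).isoExt j N)
  rw [← HomologicalComplex.exactAt_iff_isZero_homology, HomologicalComplex.exactAt_iff]
  refine ShortComplex.exact_of_isZero_X₂ _ ?_
  obtain ⟨k, rfl⟩ : ∃ k, j = k + 5 := ⟨j - 5, by omega⟩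
  refine @ModuleCat.isZero_of_subsingleton _ _ _ ⟨fun a b => ?_⟩
  refine ModuleCat.hom_ext (LinearMap.ext fun x => ?_)
  have : x = 0 := Subsingleton.elim (α := PUnit) _ _
  exact ((congrArg _ this).trans (map_zero (ModuleCat.Hom.hom a))).trans
    ((congrArg _ this).trans (map_zero (ModuleCat.Hom.hom b))).symm

include h4 h43 h32 h21 h1 hp in
lemma ext_four (N : Type) [AddCommGroup N] [Module A N] (g : P4 →ₗ[A] N)
     (hg : ¬ ∃ f : P3 →ₗ[A] N, f ∘ₗ d4 = g) :
    Nontrivial (((Ext A (ModuleCat.{0} A) 4).obj (Opposite.op (ModuleCat.of A M))).obj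
      (ModuleCat.of A N)) := by
  by_contra hn
  rw [not_nontrivial_iff_subsingleton] at hn
  have h := ModuleCat.isZero_of_subsingleton (((Ext A (ModuleCat.{0} A) 4).obj
    (Opposite.op (ModuleCat.of A M))).obj (ModuleCat.of A N))
  have h' := Limits.IsZero.of_iso h 
    ((resP d4 d3 d2 d1 p h4 h43 h32 h21 h1 hp).isoExt 4 (ModuleCat.of A N)).symm
  rw [← HomologicalComplex.exactAt_iff_isZero_homology, 
    HomologicalComplex.exactAt_iff' _ 3 4 5 (by simp) (by simp),
    ShortComplex.moduleCat_exact_iff] at h'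
  obtain ⟨f, hf⟩ := h' (ModuleCat.ofHom g : ModuleCat.of A P4 ⟶ _) (by
    refine ModuleCat.hom_ext (LinearMap.ext fun x => ?_)
    have : x = 0 := Subsingleton.elim (α := PUnit) _ _
    rw [this, map_zero, map_zero])
  apply hg
  refine ⟨ModuleCat.Hom.hom f, ?_⟩
  have := congrArg ModuleCat.Hom.hom hf
  refine Eq.trans ?_ this
  change _ = ModuleCat.Hom.hom ((resC d4 d3 d2 d1 h43 h32 h21).d (3 + 1) 3 ≫ f)
  rw [resC_d]
  rfl

end ExtPart

abbrev T8 : Type := MvPolynomial (Fin 8) ℤ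

def iU (k : Fin 3) : Fin 6 := Fin.castAdd 3 k
def iV (k : Fin 3) : Fin 6 := Fin.natAdd 3 k

def E8 (n : ℕ) : Fin 6 → (Fin 8 →₀ ℕ) := fun j =>
  if j.val < 3 then
    (if j.val < n then Finsupp.single 6 1 + Finsupp.single (Fin.castAdd 2 j) 1
      else Finsupp.single (Fin.castAdd 2 j) 1)
  else
    (if j.val < n + 3 then Finsupp.single 7 1 + Finsupp.single (Fin.castAdd 2 (j - 3)) 1
      else Finsupp.single (Fin.castAdd 2 j) 1)

def p8 (n : ℕ) : (Fin 6 →₀ ℕ) →ₗ[ℕ] (Fin 8 →₀ ℕ) := Finsupp.linearCombination ℕ (E8 n)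

def c8 (d i : ℕ) : Fin 8 →₀ ℕ := Finsupp.single 6 (d - i) + Finsupp.single 7 i

def phi (n : ℕ) : R16 →ₐ[ℤ] T8 := aeval (fun j => monomial (E8 n j) 1)

lemma phi_monomial (n : ℕ) (m : Fin 6 →₀ ℕ) (c : ℤ) :
    phi n (monomial m c) = monomial (p8 n m) c := by
  have h1 : ∀ m : Fin 6 →₀ ℕ, phi n (monomial m 1) = monomial (p8 n m) 1 := by
    intro m
    induction m using Finsupp.induction_linear with
    | zero => simp [phi]
    | add f g hf hg =>
      rw [map_add, ← one_mul (1 : ℤ), ← monomial_mul, ← monomial_mul, map_mul, hf, hg]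
    | single a b =>
      rw [p8, Finsupp.linearCombination_single, phi, aeval_monomial]
      simp [monomial_pow]
  have : ∀ (σ : Type) (m : σ →₀ ℕ), (monomial m c : MvPolynomial σ ℤ) = c • monomial m 1 := by
    intro σ m; rw [smul_monomial]; simp
  rw [this, this, map_smul, h1]

def rel (d : ℕ) (k : Fin 3) (i : Fin d) : Fin (d + 1) → R16 :=
  Pi.single i.castSucc (X (iV k)) - Pi.single i.succ (X (iU k))

def N (n d : ℕ) : Submodule R16 (Fin (d + 1) → R16) :=
  Submodule.span R16 (Set.range fun p : Fin 3 × Fin d => if p.1.val < n then rel d p.1 p.2 else 0)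

def gg (n d : ℕ) (m : Fin 6 →₀ ℕ) (i : Fin (d + 1)) : (Fin (d + 1) → R16) ⧸ N n d :=
  (N n d).mkQ (Pi.single i (monomial m 1))

lemma gg_mul (n d : ℕ) (m : Fin 6 →₀ ℕ) (j : Fin 6) (i : Fin (d + 1)) :
    gg n d (m + Finsupp.single j 1) i = (X j : R16) • gg n d m i := by
  rw [gg, gg, ← map_smul]
  congr 1
  rw [← Pi.single_smul, smul_eq_mul, X, monomial_mul, add_comm m, one_mul]

lemma gg_move (n d : ℕ) (m : Fin 6 →₀ ℕ) (k : Fin 3) (hk : k.val < n) (i : Fin d) :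
    gg n d (m + Finsupp.single (iV k) 1) i.castSucc = gg n d (m + Finsupp.single (iU k) 1) i.succ := by
  rw [gg, gg, Submodule.mkQ_apply, Submodule.mkQ_apply, Submodule.Quotient.eq]
  have : rel d k i ∈ N n d := Submodule.subset_span ⟨(k, i), by simp [hk]⟩
  convert (N n d).smul_mem (monomial m 1) this using 1
  rw [rel, smul_sub, ← Pi.single_smul, ← Pi.single_smul, smul_eq_mul, smul_eq_mul, X, X,
    monomial_mul, monomial_mul, one_mul]

lemma p8_move (n d : ℕ) (m : Fin 6 →₀ ℕ) (k : Fin 3) (hk : k.val < n) (i : Fin d) :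
    p8 n (m + Finsupp.single (iV k) 1) + c8 d i.castSucc =
      p8 n (m + Finsupp.single (iU k) 1) + c8 d i.succ := by
  rw [map_add, map_add, add_assoc, add_assoc]
  congr 1
  simp only [p8, Finsupp.linearCombination_single, one_smul, E8, c8]
  have h1 : ¬ (iV k).val < 3 := by simp [iV]
  have h2 : (iV k).val < n + 3 := by simp [iV]; omega
  have h3 : (iU k).val < 3 := by simp [iU]
  have h4 : (iU k).val < n := by simp [iU]; omega
  have h5 : iV k - 3 = iU k := by clear * -; revert k; decide
  simp only [h1, h2, h3, h4, h5, if_true, if_false]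
  have h6 : d - i.val = 1 + (d - (i.val + 1)) := by omega
  simp only [Fin.val_castSucc, Fin.val_succ]
  rw [h6, Finsupp.single_add, Finsupp.single_add]
  abel

lemma split {m : Fin 6 →₀ ℕ} {j : Fin 6} (h : 0 < m j) : ∃ m', m = m' + Finsupp.single j 1 :=
  ⟨m - Finsupp.single j 1, by
    rw [tsub_add_cancel_of_le]
    rw [Finsupp.single_le_iff]; omega⟩

lemma coord (n : ℕ) (d : ℕ) (m m' : Fin 6 →₀ ℕ) (i i' : ℕ)
    (h : p8 n m + c8 d i = p8 n m' + c8 d i') (l : Fin 8) :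
    (∑ j, m j * E8 n j l) + c8 d i l = (∑ j, m' j * E8 n j l) + c8 d i' l := by
  have := DFunLike.congr_fun h l
  simpa [p8, Finsupp.linearCombination_apply, Finsupp.sum_fintype, Finsupp.finsetSum_apply] using this

lemma coords (n : ℕ) (hn : n = 1 ∨ n = 2 ∨ n = 3) (d : ℕ) (m m' : Fin 6 →₀ ℕ) (i i' : ℕ)
    (h : p8 n m + c8 d i = p8 n m' + c8 d i') :
    (∀ k, m (iU k) + m (iV k) = m' (iU k) + m' (iV k)) ∧
    (∀ k : Fin 3, ¬ k.val < n → m (iU k) = m' (iU k)) ∧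
    (∑ k : Fin 3, if k.val < n then m (iV k) else 0) + i =
      (∑ k : Fin 3, if k.val < n then m' (iV k) else 0) + i' := by
  have h := coord n d m m' i i' h
  have h0 := h 0
  have h1 := h 1
  have h2 := h 2
  have h3 := h 3
  have h4 := h 4
  have h5 := h 5
  have h7 := h 7
  clear h
  rcases hn with rfl | rfl | rfl <;>
  · simp [Fin.sum_univ_succ, E8, c8, Finsupp.single_apply] at h0 h1 h2 h3 h4 h5 h7
    simp [Fin.forall_fin_succ, Fin.sum_univ_succ, iU, iV]
    omega

lemma cases6 : ∀ j : Fin 6, ∃ k : Fin 3, j = iU k ∨ j = iV k := by decide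

lemma degree6 (m : Fin 6 →₀ ℕ) : m.degree = ∑ k, (m (iU k) + m (iV k)) := by
  rw [Finsupp.degree_eq_sum]
  simp [Fin.sum_univ_succ, iU, iV]
  ring

lemma inv (n d : ℕ) (hn : n = 1 ∨ n = 2 ∨ n = 3) (hd : 0 < d) : ∀ (D : ℕ) (m m' : Fin 6 →₀ ℕ)
    (i i' : Fin (d + 1)), m.degree = D → p8 n m + c8 d i = p8 n m' + c8 d i' →
    gg n d m i = gg n d m' i' := by
  intro D
  induction D with
  | zero =>
    intro m m' i i' hD h
    obtain ⟨h1, -, h2⟩ := coords n hn d m m' i i' h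
    rw [Finsupp.degree_eq_zero_iff] at hD
    subst hD
    have hm' : m' = 0 := by
      ext j
      obtain ⟨k, rfl | rfl⟩ := cases6 j <;> have := h1 k <;> simp at this ⊢ <;> omega
    subst hm'
    have : i = i' := by ext; simpa using h2
    rw [this]
  | succ D ih =>
    have common : ∀ (m m' : Fin 6 →₀ ℕ) (i i' : Fin (d + 1)) (j : Fin 6), m.degree = D + 1 →
      p8 n m + c8 d i = p8 n m' + c8 d i' → 0 < m j → 0 < m' j → gg n d m i = gg n d m' i' := by
      intro m m' i i' j hD h hm hm'
      obtain ⟨m, rfl⟩ := split hm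
      obtain ⟨m', rfl⟩ := split hm'
      rw [gg_mul, gg_mul]
      congr 1
      apply ih
      · simpa using hD
      · rw [map_add, map_add] at h
        apply add_right_cancel (b := p8 n (Finsupp.single j 1))
        rw [add_right_comm, h, add_right_comm]
    -- m has U k, m' has V k
    have keyA : ∀ (m m' : Fin 6 →₀ ℕ) (i i' : Fin (d + 1)) (k : Fin 3), k.val < n → m.degree = D + 1 →
      p8 n m + c8 d i = p8 n m' + c8 d i' → 0 < m (iU k) → 0 < m' (iV k) → i'.val < d →
      gg n d m i = gg n d m' i' := by
      intro m m' i i' k hk hD h hm hm' hi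
      obtain ⟨m', rfl⟩ := split hm'
      obtain ⟨i', rfl⟩ : ∃ i'' : Fin d, i' = i''.castSucc := ⟨⟨i', hi⟩, rfl⟩
      rw [gg_move n d m' k hk]
      rw [p8_move n d m' k hk] at h
      exact common _ _ _ _ (iU k) hD h hm (by simp)
    have keyB : ∀ (m m' : Fin 6 →₀ ℕ) (i i' : Fin (d + 1)) (k : Fin 3), k.val < n → m.degree = D + 1 →
      p8 n m + c8 d i = p8 n m' + c8 d i' → 0 < m (iU k) → 0 < m' (iV k) → 0 < i.val →
      gg n d m i = gg n d m' i' := by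
      intro m m' i i' k hk hD h hm hm' hi
      obtain ⟨m, rfl⟩ := split hm
      obtain ⟨i, rfl⟩ : ∃ i'' : Fin d, i = i''.succ := ⟨⟨i - 1, by omega⟩, by ext; simp; omega⟩
      rw [← gg_move n d m k hk]
      rw [← p8_move n d m k hk] at h
      exact common _ _ _ _ (iV k) (by simpa using hD) h (by simp) hm' 
    intro m m' i i' hD h
    by_contra hne
    have hc : ∀ j, m j = 0 ∨ m' j = 0 := by
      intro j
      by_contra hj
      push Not at hj
      exact hne (common m m' i i' j hD h (by omega) (by omega))
    obtain ⟨h1, h2, h3⟩ := coords n hn d m m' i i' h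
    have hD' : m'.degree = D + 1 := by rw [← hD, degree6, degree6]; simp [h1]
    have hun : ∀ k : Fin 3, ¬ k.val < n → m (iU k) = 0 ∧ m (iV k) = 0 := by
      intro k hk
      have := h1 k
      have := h2 k hk
      have := hc (iU k)
      have := hc (iV k)
      omega
    have hA : ∀ k : Fin 3, k.val < n → 0 < m (iU k) → i'.val = d ∧ i.val = 0 := by
      intro k hk hm
      have := h1 k
      have := hc (iU k)
      have hm' : 0 < m' (iV k) := by omega
      have h5 : ¬ i'.val < d := fun h5 => hne (keyA m m' i i' k hk hD h hm hm' h5)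
      have h6 : ¬ 0 < i.val := fun h5 => hne (keyB m m' i i' k hk hD h hm hm' h5)
      omega
    have hB : ∀ k : Fin 3, k.val < n → 0 < m (iV k) → i.val = d ∧ i'.val = 0 := by
      intro k hk hm
      have := h1 k
      have := hc (iV k)
      have hm' : 0 < m' (iU k) := by omega
      have h5 : ¬ i.val < d := fun h5 => hne (keyA m' m i' i k hk hD' h.symm hm' hm h5).symm
      have h6 : ¬ 0 < i'.val := fun h5 => hne (keyB m' m i' i k hk hD' h.symm hm' hm h5).symm
      omega
    by_cases hx : ∃ k : Fin 3, k.val < n ∧ 0 < m (iU k)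
    · obtain ⟨k, hk, hm⟩ := hx
      obtain ⟨e1, e2⟩ := hA k hk hm
      have hz : (∑ k : Fin 3, if k.val < n then m (iV k) else 0) = 0 := by
        apply Finset.sum_eq_zero
        intro k _
        split_ifs with hk
        · by_contra h0
          have := hB k hk (by omega)
          omega
        · rfl
      omega
    · push Not at hx
      by_cases hy : ∃ k : Fin 3, k.val < n ∧ 0 < m (iV k)
      · obtain ⟨k, hk, hm⟩ := hy
        obtain ⟨e1, e2⟩ := hB k hk hm
        have hz : (∑ k : Fin 3, if k.val < n then m' (iV k) else 0) = 0 := by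
          apply Finset.sum_eq_zero
          intro k _
          split_ifs with hk
          · have := hx k hk
            have := h1 k
            have := hc (iV k)
            omega
          · rfl
        omega
      · push Not at hy
        rw [degree6, Finset.sum_eq_zero] at hD
        · omega
        · intro k _
          by_cases hk : k.val < n
          · have := hx k hk
            have := hy k hk
            omega
          · have := hun k hk
            omega

lemma kernel (n d : ℕ) (hn : n = 1 ∨ n = 2 ∨ n = 3) (hd : 0 < d) (b : Fin (d + 1) → R16)
    (hb : ∑ i, phi n (b i) * monomial (c8 d i) 1 = 0) : b ∈ N n d := by
  classical
  let h : (Fin 8 →₀ ℕ) → (Fin (d + 1) → R16) ⧸ N n d := fun e =>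
    if he : ∃ q : (Fin 6 →₀ ℕ) × Fin (d + 1), p8 n q.1 + c8 d q.2 = e then
      gg n d he.choose.1 he.choose.2 else 0
  have hh : ∀ m (i : Fin (d + 1)), h (p8 n m + c8 d i) = gg n d m i := by
    intro m i
    have he : ∃ q : (Fin 6 →₀ ℕ) × Fin (d + 1), p8 n q.1 + c8 d q.2 = p8 n m + c8 d i :=
      ⟨(m, i), rfl⟩
    simp only [h]
    rw [dif_pos he]
    exact inv n d hn hd _ _ _ _ _ rfl he.choose_spec
  let σ : T8 →ₗ[ℤ] (Fin (d + 1) → R16) ⧸ N n d := (basisMonomials (Fin 8) ℤ).constr ℤ h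
  have hσ : ∀ e, σ (monomial e 1) = h e := by
    intro e
    have := (basisMonomials (Fin 8) ℤ).constr_basis ℤ h e
    rwa [coe_basisMonomials] at this
  have key : ∀ (i : Fin (d + 1)) (f : R16),
      σ (phi n f * monomial (c8 d i) 1) = (N n d).mkQ (Pi.single i f) := by
    intro i f
    induction f using MvPolynomial.induction_on' with
    | monomial m c =>
      rw [phi_monomial, monomial_mul, mul_one]
      have e1 : ∀ (τ : Type) (m : τ →₀ ℕ), (monomial m c : MvPolynomial τ ℤ) = c • monomial m 1 := by
        intro σ m; rw [smul_monomial]; simp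
      rw [e1, e1, map_smul, hσ, hh, gg, Pi.single_smul, map_zsmul]
    | add p q hp hq =>
      rw [map_add, add_mul, map_add, hp, hq, Pi.single_add, map_add]
  have h0 := congrArg σ hb
  rw [map_sum, map_zero] at h0
  simp only [key] at h0
  rw [← map_sum, Finset.univ_sum_single] at h0
  simpa using h0


lemma mono_c8 (d i : ℕ) : (monomial (c8 d i) 1 : T8) = X 6 ^ (d - i) * X 7 ^ i := by
  rw [c8, X_pow_eq_monomial, X_pow_eq_monomial, monomial_mul, one_mul]

lemma mono_add (a b : Fin 8) : (monomial (Finsupp.single a 1 + Finsupp.single b 1) 1 : T8) = X a * X b := by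
  rw [X, X, monomial_mul, one_mul]

lemma mono_one (a : Fin 8) : (monomial (Finsupp.single a 1) 1 : T8) = X a := rfl

lemma phi1 : phi 1 u = X 6 * X 0 ∧ phi 1 v = X 1 ∧ phi 1 w = X 2 ∧
    phi 1 x = X 7 * X 0 ∧ phi 1 y = X 4 ∧ phi 1 z = X 5 := by
  simp only [u, v, w, x, y, z, phi, aeval_X, E8]
  refine ⟨mono_add _ _, mono_one _, mono_one _, mono_add _ _, mono_one _, mono_one _⟩

lemma phi2 : phi 2 u = X 6 * X 0 ∧ phi 2 v = X 6 * X 1 ∧ phi 2 w = X 2 ∧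
    phi 2 x = X 7 * X 0 ∧ phi 2 y = X 7 * X 1 ∧ phi 2 z = X 5 := by
  simp only [u, v, w, x, y, z, phi, aeval_X, E8]
  refine ⟨mono_add _ _, mono_add _ _, mono_one _, mono_add _ _, mono_add _ _, mono_one _⟩

lemma phi3 : phi 3 u = X 6 * X 0 ∧ phi 3 v = X 6 * X 1 ∧ phi 3 w = X 6 * X 2 ∧
    phi 3 x = X 7 * X 0 ∧ phi 3 y = X 7 * X 1 ∧ phi 3 z = X 7 * X 2 := by
  simp only [u, v, w, x, y, z, phi, aeval_X, E8]
  refine ⟨mono_add _ _, mono_add _ _, mono_add _ _, mono_add _ _, mono_add _ _, mono_add _ _⟩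

lemma relk (d : ℕ) (i : Fin d) :
    rel d 0 i = Pi.single i.castSucc x - Pi.single i.succ u ∧
    rel d 1 i = Pi.single i.castSucc y - Pi.single i.succ v ∧
    rel d 2 i = Pi.single i.castSucc z - Pi.single i.succ w := ⟨rfl, rfl, rfl⟩

lemma memN (n d : ℕ) (b : Fin (d + 1) → R16) (hb : b ∈ N n d) : ∃ c : Fin 3 × Fin d → R16,
    b = ∑ i, (if 0 < n then c (0, i) • (Pi.single i.castSucc x - Pi.single i.succ u) else 0)
      + ∑ i, (if 1 < n then c (1, i) • (Pi.single i.castSucc y - Pi.single i.succ v) else 0)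
      + ∑ i, (if 2 < n then c (2, i) • (Pi.single i.castSucc z - Pi.single i.succ w) else 0) := by
  rw [N, Submodule.mem_span_range_iff_exists_fun] at hb
  obtain ⟨c, rfl⟩ := hb
  refine ⟨c, ?_⟩
  rw [Fintype.sum_prod_type]
  simp only [Fin.sum_univ_three, (relk d _).1, (relk d _).2.1, (relk d _).2.2, smul_ite, smul_zero]
  rfl

lemma L11 (q0 q1 : R16) (h : phi 1 q0 * X 6 + phi 1 q1 * X 7 = 0) :
    ∃ c, q0 = x * c ∧ q1 = - u * c := by
  have := kernel 1 1 (by simp) (by simp) ![q0, q1] (by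
    simpa [Fin.sum_univ_succ, mono_c8] using h)
  obtain ⟨c, hc⟩ := memN _ _ _ this
  have h0 := congrFun hc 0
  have h1 := congrFun hc 1
  simp [Fin.sum_univ_succ] at h0 h1
  exact ⟨c (0, 0), by rw [h0]; ring, by rw [h1]; ring⟩

lemma L12 (q0 q1 q2 : R16)
    (h : phi 1 q0 * X 6 ^ 2 + phi 1 q1 * (X 6 * X 7) + phi 1 q2 * X 7 ^ 2 = 0) :
    ∃ c0 c1, q0 = x * c0 ∧ q1 = x * c1 - u * c0 ∧ q2 = - u * c1 := by
  have := kernel 1 2 (by simp) (by simp) ![q0, q1, q2] (by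
    simpa [Fin.sum_univ_succ, mono_c8, add_assoc] using h)
  obtain ⟨c, hc⟩ := memN _ _ _ this
  have h0 := congrFun hc 0
  have h1 := congrFun hc 1
  have h2 := congrFun hc 2
  simp [Fin.sum_univ_succ, Pi.single_apply] at h0 h1 h2
  exact ⟨c (0, 0), c (0, 1), by rw [h0]; ring, by rw [h1]; ring, by rw [h2]; ring⟩

lemma L22 (q0 q1 q2 : R16)
    (h : phi 2 q0 * X 6 ^ 2 + phi 2 q1 * (X 6 * X 7) + phi 2 q2 * X 7 ^ 2 = 0) :
    ∃ c0 c1 e0 e1, q0 = x * c0 + y * e0 ∧ q1 = x * c1 - u * c0 + y * e1 - v * e0 ∧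
      q2 = - u * c1 - v * e1 := by
  have := kernel 2 2 (by simp) (by simp) ![q0, q1, q2] (by
    simpa [Fin.sum_univ_succ, mono_c8, add_assoc] using h)
  obtain ⟨c, hc⟩ := memN _ _ _ this
  have h0 := congrFun hc 0
  have h1 := congrFun hc 1
  have h2 := congrFun hc 2
  simp [Fin.sum_univ_succ, Pi.single_apply] at h0 h1 h2
  exact ⟨c (0, 0), c (0, 1), c (1, 0), c (1, 1), by rw [h0]; ring, by rw [h1]; ring,
    by rw [h2]; ring⟩

lemma L33 (q0 q1 q2 q3 : R16)
    (h : phi 3 q0 * X 6 ^ 3 + phi 3 q1 * (X 6 ^ 2 * X 7) + phi 3 q2 * (X 6 * X 7 ^ 2)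
      + phi 3 q3 * X 7 ^ 3 = 0) :
    ∃ a0 a1 a2 b0 b1 b2 c0 c1 c2, q0 = x * a0 + y * b0 + z * c0 ∧
      q1 = x * a1 - u * a0 + y * b1 - v * b0 + z * c1 - w * c0 ∧
      q2 = x * a2 - u * a1 + y * b2 - v * b1 + z * c2 - w * c1 ∧
      q3 = - u * a2 - v * b2 - w * c2 := by
  have := kernel 3 3 (by simp) (by simp) ![q0, q1, q2, q3] (by
    simpa [Fin.sum_univ_succ, mono_c8, add_assoc] using h)
  obtain ⟨c, hc⟩ := memN _ _ _ this
  have h0 := congrFun hc 0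
  have h1 := congrFun hc 1
  have h2 := congrFun hc 2
  have h3 := congrFun hc 3
  simp [Fin.sum_univ_succ, Pi.single_apply] at h0 h1 h2 h3
  exact ⟨c (0, 0), c (0, 1), c (0, 2), c (1, 0), c (1, 1), c (1, 2), c (2, 0), c (2, 1), c (2, 2),
    by rw [h0]; ring, by rw [h1]; ring, by rw [h2]; ring, by rw [h3]; ring⟩

lemma x_ne : x ≠ 0 := X_ne_zero _
lemma u_ne : u ≠ 0 := X_ne_zero _

lemma ne_of_eval {σ : Type} (f : MvPolynomial σ ℤ) (g : σ → ℤ) (h : MvPolynomial.eval g f ≠ 0) : f ≠ 0 := by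
  rintro rfl
  exact h (map_zero _)

lemma kerC1 (a0 a1 a2 b0 b1 b2 c0 c1 c2 : R16)
    (e0 : x * a0 + y * b0 + z * c0 = 0)
    (e1 : x * a1 - u * a0 + y * b1 - v * b0 + z * c1 - w * c0 = 0)
    (e2 : x * a2 - u * a1 + y * b2 - v * b1 + z * c2 - w * c1 = 0)
    (e3 : - u * a2 - v * b2 - w * c2 = 0) :
    ∃ p0 p1 q0 q1 r0 r1,
      a0 = - y * p0 - z * q0 ∧ a1 = - (y * p1 - v * p0) - (z * q1 - w * q0) ∧ a2 = v * p1 + w * q1 ∧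
      b0 = x * p0 - z * r0 ∧ b1 = (x * p1 - u * p0) - (z * r1 - w * r0) ∧ b2 = - u * p1 + w * r1 ∧
      c0 = x * q0 + y * r0 ∧ c1 = (x * q1 - u * q0) + (y * r1 - v * r0) ∧ c2 = - u * q1 - v * r1 := by
  have hc : phi 2 c0 * X 6 ^ 2 + phi 2 c1 * (X 6 * X 7) + phi 2 c2 * X 7 ^ 2 = 0 := by
    have f0 := congrArg (phi 2) e0
    have f1 := congrArg (phi 2) e1
    have f2 := congrArg (phi 2) e2
    have f3 := congrArg (phi 2) e3
    simp only [map_add, map_sub, map_mul, map_neg, map_zero, phi2] at f0 f1 f2 f3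
    have hne : (X 5 * X 6 - X 2 * X 7 : T8) ≠ 0 :=
      ne_of_eval _ ![0, 0, 0, 0, 0, 1, 1, 0] (by simp)
    refine (mul_eq_zero.1 ?_).resolve_left hne
    linear_combination X 6 ^ 3 * f0 + X 6 ^ 2 * X 7 * f1 + X 6 * X 7 ^ 2 * f2 + X 7 ^ 3 * f3
  obtain ⟨q0, q1, r0, r1, rfl, rfl, rfl⟩ := L22 _ _ _ hc
  have hb : phi 1 (b0 + z * r0) * X 6 ^ 2 + phi 1 (b1 + (z * r1 - w * r0)) * (X 6 * X 7)
      + phi 1 (b2 - w * r1) * X 7 ^ 2 = 0 := by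
    have f0 := congrArg (phi 1) e0
    have f1 := congrArg (phi 1) e1
    have f2 := congrArg (phi 1) e2
    have f3 := congrArg (phi 1) e3
    simp only [map_add, map_sub, map_mul, map_neg, map_zero, phi1] at f0 f1 f2 f3 ⊢
    have hne : (X 4 * X 6 - X 1 * X 7 : T8) ≠ 0 :=
      ne_of_eval _ ![0, 0, 0, 0, 1, 0, 1, 0] (by simp)
    refine (mul_eq_zero.1 ?_).resolve_left hne
    linear_combination X 6 ^ 3 * f0 + X 6 ^ 2 * X 7 * f1 + X 6 * X 7 ^ 2 * f2 + X 7 ^ 3 * f3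
  obtain ⟨p0, p1, h0, h1, h2⟩ := L12 _ _ _ hb
  have k0 : a0 + z * q0 + y * p0 = 0 := by
    refine (mul_eq_zero.1 ?_).resolve_left x_ne
    linear_combination e0 - y * h0
  have k2 : a2 - w * q1 - v * p1 = 0 := by
    refine (mul_eq_zero.1 ?_).resolve_left u_ne
    linear_combination - e3 - v * h2
  have k1 : a1 + (z * q1 - w * q0) + (y * p1 - v * p0) = 0 := by
    refine (mul_eq_zero.1 ?_).resolve_left x_ne
    linear_combination e1 - y * h1 + v * h0 + u * k0
  refine ⟨p0, p1, q0, q1, r0, r1, ?_, ?_, ?_, ?_, ?_, ?_, ?_, ?_, ?_⟩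
  · linear_combination k0
  · linear_combination k1
  · linear_combination k2
  · linear_combination h0
  · linear_combination h1
  · linear_combination h2
  · ring
  · ring
  · ring

lemma kerC2 (p0 p1 q0 q1 r0 r1 : R16)
    (e1 : x * p0 - z * r0 = 0) (e2 : - u * p1 + w * r1 = 0)
    (e3 : x * q0 + y * r0 = 0) (e4 : (x * q1 - u * q0) + (y * r1 - v * r0) = 0)
    (e5 : - u * q1 - v * r1 = 0) :
    ∃ c, p0 = z * c ∧ p1 = - w * c ∧ q0 = - y * c ∧ q1 = v * c ∧ r0 = x * c ∧ r1 = - u * c := by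
  have hr : phi 1 r0 * X 6 + phi 1 r1 * X 7 = 0 := by
    have f0 := congrArg (phi 1) e3
    have f1 := congrArg (phi 1) e4
    have f2 := congrArg (phi 1) e5
    simp only [map_add, map_sub, map_mul, map_neg, map_zero, phi1] at f0 f1 f2
    have hne : (X 4 * X 6 - X 1 * X 7 : T8) ≠ 0 :=
      ne_of_eval _ ![0, 0, 0, 0, 1, 0, 1, 0] (by simp)
    refine (mul_eq_zero.1 ?_).resolve_left hne
    linear_combination X 6 ^ 2 * f0 + X 6 * X 7 * f1 + X 7 ^ 2 * f2
  obtain ⟨c, rfl, rfl⟩ := L11 _ _ hr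
  refine ⟨c, ?_, ?_, ?_, ?_, rfl, rfl⟩
  · exact mul_left_cancel₀ x_ne (by linear_combination e1)
  · exact mul_left_cancel₀ u_ne (by linear_combination - e2)
  · exact mul_left_cancel₀ x_ne (by linear_combination e3)
  · exact mul_left_cancel₀ u_ne (by linear_combination - e5)

lemma kerM (a b c q0 q1 q2 q3 : R16)
    (h : a * (v * z - w * y) + b * (w * x - u * z) + c * (u * y - v * x)
      + q0 * (u ^ 3 + v ^ 3 + w ^ 3) + q1 * (u ^ 2 * x + v ^ 2 * y + w ^ 2 * z)
      + q2 * (u * x ^ 2 + v * y ^ 2 + w * z ^ 2) + q3 * (x ^ 3 + y ^ 3 + z ^ 3) = 0) :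
    ∃ a0 a1 a2 b0 b1 b2 c0 c1 c2, q0 = x * a0 + y * b0 + z * c0 ∧
      q1 = x * a1 - u * a0 + y * b1 - v * b0 + z * c1 - w * c0 ∧
      q2 = x * a2 - u * a1 + y * b2 - v * b1 + z * c2 - w * c1 ∧
      q3 = - u * a2 - v * b2 - w * c2 := by
  apply L33
  have f := congrArg (phi 3) h
  simp only [map_add, map_sub, map_mul, map_pow, map_zero, phi3] at f
  have hne : (X 0 ^ 3 + X 1 ^ 3 + X 2 ^ 3 : T8) ≠ 0 :=
    ne_of_eval _ ![1, 0, 0, 0, 1, 0, 1, 0] (by simp)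
  refine (mul_eq_zero.1 ?_).resolve_left hne
  linear_combination f

def psi : R16 →ₐ[ℤ] R16 := aeval ![u, v, 0, x, y, 0]

lemma psi_vals : psi u = u ∧ psi v = v ∧ psi w = 0 ∧ psi x = x ∧ psi y = y ∧ psi z = 0 := by
  refine ⟨?_, ?_, ?_, ?_, ?_, ?_⟩ <;> exact aeval_X _ _

lemma psi_spec (c : R16) : ∃ e f, c = psi c + e * w + f * z := by
  induction c using MvPolynomial.induction_on with
  | C a => exact ⟨0, 0, by simp [psi]⟩
  | add p q hp hq =>
    obtain ⟨e, f, h⟩ := hp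
    obtain ⟨e', f', h'⟩ := hq
    refine ⟨e + e', f + f', ?_⟩
    rw [map_add]
    linear_combination h + h'
  | mul_X p i hp =>
    obtain ⟨e, f, h⟩ := hp
    obtain ⟨e', f', h'⟩ : ∃ e f, (X i : R16) = psi (X i) + e * w + f * z := by
      have := psi_vals
      fin_cases i
      · exact ⟨0, 0, by change u = psi u + _ + _; linear_combination -psi_vals.1⟩
      · exact ⟨0, 0, by change v = psi v + _ + _; linear_combination -psi_vals.2.1⟩
      · exact ⟨1, 0, by change w = psi w + _ + _; linear_combination -psi_vals.2.2.1⟩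
      · exact ⟨0, 0, by change x = psi x + _ + _; linear_combination -psi_vals.2.2.2.1⟩
      · exact ⟨0, 0, by change y = psi y + _ + _; linear_combination -psi_vals.2.2.2.2.1⟩
      · exact ⟨0, 1, by change z = psi z + _ + _; linear_combination -psi_vals.2.2.2.2.2⟩
    refine ⟨e * X i + psi p * e', f * X i + psi p * f', ?_⟩
    rw [map_mul]
    linear_combination X i * h + psi p * h'

lemma m1_prime : Prime (v * z - w * y) := by
  rw [← irreducible_iff_prime]
  have h := irreducible_mul_X_add (z : R16) (-(w * y)) 1 (X_ne_zero _) (by simp [z])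
    (by
      rw [vars_neg]
      intro h
      have := vars_mul _ _ h
      simp [w, y] at this)
    (by
      rw [IsRelPrime.neg_right_iff]
      have hz : Prime (z : R16) := X_prime
      rw [hz.irreducible.isRelPrime_iff_not_dvd]
      rw [hz.dvd_mul]
      rintro (h | h) <;> simp [z, w, y, X_dvd_X] at h)
  have e : v * z - w * y = z * X 1 + -(w * y) := by
    change _ = z * v + _
    ring
  rw [e]
  exact h

lemma kerE (a b c : R16)
    (h : a * (v * z - w * y) + b * (w * x - u * z) + c * (u * y - v * x) = 0) :
    ∃ e f, a = e * u + f * x ∧ b = e * v + f * y ∧ c = e * w + f * z := by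
  obtain ⟨e, f, hc⟩ := psi_spec c
  have hne : u * y - v * x ≠ 0 := ne_of_eval _ ![1, 0, 0, 0, 1, 0] (by simp [u, v, y, x])
  have h0 : psi c = 0 := by
    have f := congrArg psi h
    simp only [map_add, map_sub, map_mul, map_zero, psi_vals] at f
    refine (mul_eq_zero.1 ?_).resolve_right hne
    linear_combination f
  rw [h0] at hc
  have h1 : (a - e * u - f * x) * (v * z - w * y) + (b - e * v - f * y) * (w * x - u * z) = 0 := by
    linear_combination h - (u * y - v * x) * hc
  have h2 : (v * z - w * y) ∣ (b - e * v - f * y) * (w * x - u * z) :=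
    ⟨-(a - e * u - f * x), by linear_combination h1⟩
  have h3 : ¬ (v * z - w * y) ∣ (w * x - u * z) := by
    rintro ⟨t, ht⟩
    have := congrArg (MvPolynomial.eval ![0, 0, 1, 1, 0, 0]) ht
    simp [u, v, w, x, y, z] at this
  obtain ⟨t, ht⟩ := (m1_prime.dvd_or_dvd h2).resolve_right h3
  have h4 : a - e * u - f * x = - (w * x - u * z) * t := by
    apply mul_right_cancel₀ m1_prime.ne_zero
    linear_combination h1 - (w * x - u * z) * ht
  exact ⟨e + z * t, f - w * t, by linear_combination h4, by linear_combination ht,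
    by linear_combination hc⟩

lemma injE (e f : R16) (h1 : e * u + f * x = 0) (h2 : e * v + f * y = 0) : e = 0 ∧ f = 0 := by
  have hne : u * y - v * x ≠ 0 := ne_of_eval _ ![1, 0, 0, 0, 1, 0] (by simp [u, v, y, x])
  constructor
  · refine (mul_eq_zero.1 ?_).resolve_right hne
    linear_combination y * h1 - x * h2
  · refine (mul_eq_zero.1 ?_).resolve_right hne
    linear_combination u * h2 - v * h1

def D4 : (Fin 1 → R16) →ₗ[R16] (Fin 6 → R16) where
  toFun c := ![z * c 0, - w * c 0, - y * c 0, v * c 0, x * c 0, - u * c 0]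
  map_add' a b := by
    ext1 i; fin_cases i <;> simp <;> ring
  map_smul' r a := by
    ext1 i; fin_cases i <;> simp <;> ring

def D3 : (Fin 6 → R16) →ₗ[R16] (Fin 11 → R16) where
  toFun c := ![
    (w * c 0 + z * c 1) * z - (v * c 2 + y * c 3) * y + (u * c 4 + x * c 5) * x,
    - (w * c 0 + z * c 1) * w + (v * c 2 + y * c 3) * v - (u * c 4 + x * c 5) * u,
    - y * c 0 - z * c 2, - (y * c 1 - v * c 0) - (z * c 3 - w * c 2), v * c 1 + w * c 3,
    x * c 0 - z * c 4, (x * c 1 - u * c 0) - (z * c 5 - w * c 4), - u * c 1 + w * c 5,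
    x * c 2 + y * c 4, (x * c 3 - u * c 2) + (y * c 5 - v * c 4), - u * c 3 - v * c 5]
  map_add' a b := by
    ext1 i; fin_cases i <;> simp <;> ring
  map_smul' r a := by
    ext1 i; fin_cases i <;> simp <;> ring

def D2 : (Fin 11 → R16) →ₗ[R16] (Fin 7 → R16) where
  toFun c := ![
    c 0 * u + c 1 * x + (w ^ 2 * c 5 + w * z * c 6 + z ^ 2 * c 7)
      - (v ^ 2 * c 8 + v * y * c 9 + y ^ 2 * c 10),
    c 0 * v + c 1 * y - (w ^ 2 * c 2 + w * z * c 3 + z ^ 2 * c 4)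
      + (u ^ 2 * c 8 + u * x * c 9 + x ^ 2 * c 10),
    c 0 * w + c 1 * z + (v ^ 2 * c 2 + v * y * c 3 + y ^ 2 * c 4)
      - (u ^ 2 * c 5 + u * x * c 6 + x ^ 2 * c 7),
    x * c 2 + y * c 5 + z * c 8,
    x * c 3 - u * c 2 + y * c 6 - v * c 5 + z * c 9 - w * c 8,
    x * c 4 - u * c 3 + y * c 7 - v * c 6 + z * c 10 - w * c 9,
    - u * c 4 - v * c 7 - w * c 10]
  map_add' a b := by
    ext1 i; fin_cases i <;> simp <;> ring
  map_smul' r a := by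
    ext1 i; fin_cases i <;> simp <;> ring

def D1 : (Fin 7 → R16) →ₗ[R16] R16 where
  toFun c := c 0 * (v * z - w * y) + c 1 * (w * x - u * z) + c 2 * (u * y - v * x)
      + c 3 * (u ^ 3 + v ^ 3 + w ^ 3) + c 4 * (u ^ 2 * x + v ^ 2 * y + w ^ 2 * z)
      + c 5 * (u * x ^ 2 + v * y ^ 2 + w * z ^ 2) + c 6 * (x ^ 3 + y ^ 3 + z ^ 3)
  map_add' a b := by simp; ring
  map_smul' r a := by simp; ring

lemma D4_inj : Function.Injective D4 := by
  rw [injective_iff_map_eq_zero]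
  intro a ha
  have h : x * a 0 = 0 := congrFun ha 4
  ext1 i
  fin_cases i
  exact (mul_eq_zero.1 h).resolve_left x_ne

lemma D43 : Function.Exact D4 D3 := by
  intro c
  constructor
  · intro h
    have e1 : x * c 0 - z * c 4 = 0 := congrFun h 5
    have e2 : - u * c 1 + w * c 5 = 0 := congrFun h 7
    have e3 : x * c 2 + y * c 4 = 0 := congrFun h 8
    have e4 : (x * c 3 - u * c 2) + (y * c 5 - v * c 4) = 0 := congrFun h 9
    have e5 : - u * c 3 - v * c 5 = 0 := congrFun h 10
    obtain ⟨t, h0, h1, h2, h3, h4, h5⟩ := kerC2 _ _ _ _ _ _ e1 e2 e3 e4 e5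
    refine ⟨![t], ?_⟩
    ext1 i
    fin_cases i
    · exact h0.symm
    · exact h1.symm
    · exact h2.symm
    · exact h3.symm
    · exact h4.symm
    · exact h5.symm
  · rintro ⟨a, rfl⟩
    ext1 i
    fin_cases i <;> simp [D4, D3] <;> ring

lemma D32 : Function.Exact D3 D2 := by
  intro c
  constructor
  · intro h
    have e0 : x * c 2 + y * c 5 + z * c 8 = 0 := congrFun h 3
    have e1 : x * c 3 - u * c 2 + y * c 6 - v * c 5 + z * c 9 - w * c 8 = 0 := congrFun h 4
    have e2 : x * c 4 - u * c 3 + y * c 7 - v * c 6 + z * c 10 - w * c 9 = 0 := congrFun h 5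
    have e3 : - u * c 4 - v * c 7 - w * c 10 = 0 := congrFun h 6
    have k0 : c 0 * u + c 1 * x + (w ^ 2 * c 5 + w * z * c 6 + z ^ 2 * c 7)
      - (v ^ 2 * c 8 + v * y * c 9 + y ^ 2 * c 10) = 0 := congrFun h 0
    have k1 : c 0 * v + c 1 * y - (w ^ 2 * c 2 + w * z * c 3 + z ^ 2 * c 4)
      + (u ^ 2 * c 8 + u * x * c 9 + x ^ 2 * c 10) = 0 := congrFun h 1
    obtain ⟨p0, p1, q0, q1, r0, r1, h2, h3, h4, h5, h6, h7, h8, h9, h10⟩ :=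
      kerC1 _ _ _ _ _ _ _ _ _ e0 e1 e2 e3
    rw [h5, h6, h7, h8, h9, h10] at k0
    rw [h2, h3, h4, h8, h9, h10] at k1
    obtain ⟨s0, s1⟩ := injE
      (c 0 - ((w * p0 + z * p1) * z - (v * q0 + y * q1) * y + (u * r0 + x * r1) * x))
      (c 1 - (- (w * p0 + z * p1) * w + (v * q0 + y * q1) * v - (u * r0 + x * r1) * u))
      (by linear_combination k0) (by linear_combination k1)
    refine ⟨![p0, p1, q0, q1, r0, r1], ?_⟩
    ext1 i
    fin_cases i
    · exact (sub_eq_zero.1 s0).symm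
    · exact (sub_eq_zero.1 s1).symm
    · exact h2.symm
    · exact h3.symm
    · exact h4.symm
    · exact h5.symm
    · exact h6.symm
    · exact h7.symm
    · exact h8.symm
    · exact h9.symm
    · exact h10.symm
  · rintro ⟨a, rfl⟩
    ext1 i
    fin_cases i <;> simp [D2, D3] <;> ring

lemma D21 : Function.Exact D2 D1 := by
  intro c
  constructor
  · intro h
    have h : c 0 * (v * z - w * y) + c 1 * (w * x - u * z) + c 2 * (u * y - v * x)
      + c 3 * (u ^ 3 + v ^ 3 + w ^ 3) + c 4 * (u ^ 2 * x + v ^ 2 * y + w ^ 2 * z)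
      + c 5 * (u * x ^ 2 + v * y ^ 2 + w * z ^ 2) + c 6 * (x ^ 3 + y ^ 3 + z ^ 3) = 0 := h
    obtain ⟨a0, a1, a2, b0, b1, b2, c0, c1, c2, h3, h4, h5, h6⟩ := kerM _ _ _ _ _ _ _ h
    rw [h3, h4, h5, h6] at h
    obtain ⟨e, f, k0, k1, k2⟩ := kerE
      (c 0 - (w ^ 2 * b0 + w * z * b1 + z ^ 2 * b2) + (v ^ 2 * c0 + v * y * c1 + y ^ 2 * c2))
      (c 1 + (w ^ 2 * a0 + w * z * a1 + z ^ 2 * a2) - (u ^ 2 * c0 + u * x * c1 + x ^ 2 * c2))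
      (c 2 - (v ^ 2 * a0 + v * y * a1 + y ^ 2 * a2) + (u ^ 2 * b0 + u * x * b1 + x ^ 2 * b2))
      (by linear_combination h)
    refine ⟨![e, f, a0, a1, a2, b0, b1, b2, c0, c1, c2], ?_⟩
    ext1 i
    fin_cases i
    · change e * u + f * x + (w ^ 2 * b0 + w * z * b1 + z ^ 2 * b2)
        - (v ^ 2 * c0 + v * y * c1 + y ^ 2 * c2) = c 0
      linear_combination -k0
    · change e * v + f * y - (w ^ 2 * a0 + w * z * a1 + z ^ 2 * a2)
        + (u ^ 2 * c0 + u * x * c1 + x ^ 2 * c2) = c 1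
      linear_combination -k1
    · change e * w + f * z + (v ^ 2 * a0 + v * y * a1 + y ^ 2 * a2)
        - (u ^ 2 * b0 + u * x * b1 + x ^ 2 * b2) = c 2
      linear_combination -k2
    · exact h3.symm
    · exact h4.symm
    · exact h5.symm
    · exact h6.symm
  · rintro ⟨a, rfl⟩
    simp [D2, D1]
    ring

lemma D1I : Function.Exact D1 I.mkQ := by
  intro c
  rw [Submodule.mkQ_apply, Submodule.Quotient.mk_eq_zero]
  constructor
  · intro h
    have : I ≤ LinearMap.range D1 := by
      unfold I
      refine Submodule.span_le.2 ?_
      rintro f (rfl | rfl | rfl | rfl | rfl | rfl | rfl)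
      · exact ⟨![1, 0, 0, 0, 0, 0, 0], by simp [D1]⟩
      · exact ⟨![0, 1, 0, 0, 0, 0, 0], by simp [D1]⟩
      · exact ⟨![0, 0, 1, 0, 0, 0, 0], by simp [D1]⟩
      · exact ⟨![0, 0, 0, 0, 0, 0, 1], by simp [D1]⟩
      · exact ⟨![0, 0, 0, 0, 0, 1, 0], by simp [D1]⟩
      · exact ⟨![0, 0, 0, 0, 1, 0, 0], by simp [D1]⟩
      · exact ⟨![0, 0, 0, 1, 0, 0, 0], by simp [D1]⟩
    exact this h
  · rintro ⟨a, rfl⟩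
    have hm : ∀ f ∈ ({v * z - w * y, w * x - u * z, u * y - v * x,
        x ^ 3 + y ^ 3 + z ^ 3, u * x ^ 2 + v * y ^ 2 + w * z ^ 2,
        u ^ 2 * x + v ^ 2 * y + w ^ 2 * z, u ^ 3 + v ^ 3 + w ^ 3} : Set R16), ∀ r, r * f ∈ I :=
      fun f hf r => Ideal.mul_mem_left _ _ (Ideal.subset_span hf)
    change _ + _ ∈ I
    refine add_mem (add_mem (add_mem (add_mem (add_mem (add_mem ?_ ?_) ?_) ?_) ?_) ?_) ?_ <;>
      exact hm _ (by simp) _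

lemma no_lift : ¬ ∃ f : (Fin 6 → R16) →ₗ[R16] R16,
    f ∘ₗ D4 = (LinearMap.proj 0 : (Fin 1 → R16) →ₗ[R16] R16) := by
  rintro ⟨f, hf⟩
  have h1 := LinearMap.congr_fun hf ![1]
  rw [LinearMap.comp_apply, LinearMap.pi_apply_eq_sum_univ f] at h1
  have h2 := congrArg (MvPolynomial.eval (fun _ => (0 : ℤ))) h1
  simp [Fin.sum_univ_succ, D4, u, v, w, x, y, z] at h2


theorem free_resolution_of_segre_cone :
    (∃ (d₄ : (Fin 1 → R16) →ₗ[R16] (Fin 6 → R16))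
       (d₃ : (Fin 6 → R16) →ₗ[R16] (Fin 11 → R16))
       (d₂ : (Fin 11 → R16) →ₗ[R16] (Fin 7 → R16))
       (d₁ : (Fin 7 → R16) →ₗ[R16] R16),
       Function.Injective d₄ ∧ Function.Exact d₄ d₃ ∧ Function.Exact d₃ d₂ ∧
         Function.Exact d₂ d₁ ∧ Function.Exact d₁ I.mkQ ∧
         Function.Surjective I.mkQ) ∧
    Nontrivial (((Ext R16 (ModuleCat R16) 4).obj
      (Opposite.op (ModuleCat.of R16 (R16 ⧸ I)))).obj (ModuleCat.of R16 R16)) ∧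
    (∀ j : ℕ, 4 < j → Subsingleton (((Ext R16 (ModuleCat R16) j).obj
      (Opposite.op (ModuleCat.of R16 (R16 ⧸ I)))).obj (ModuleCat.of R16 R16))) := by
  refine ⟨⟨D4, D3, D2, D1, D4_inj, D43, D32, D21, D1I, I.mkQ_surjective⟩, ?_, ?_⟩
  · exact ext_four D4 D3 D2 D1 I.mkQ D4_inj D43 D32 D21 D1I I.mkQ_surjective R16
      (LinearMap.proj 0) no_lift
  · intro j hj
    exact ext_big D4 D3 D2 D1 I.mkQ D4_inj D43 D32 D21 D1I I.mkQ_surjective _ j hj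

end Stmt16
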